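/- Let $d \geq 1$, $M > 0$, and $\delta \in (0, 1/10)$. Then for each coordinate index $\nu \in \{1, \dots, d\}$ there exists a constant $M_\nu(\delta) \geq 0$ such that for every $\lambda > 0$ and every $\mathbf{p} \in \mathbb{R}^d$, $$|p^\nu| \, (|\mathbf{p}|^2 + M^2 + \lambda)^{-1} (\sqrt{|\mathbf{p}|^2 + M^2} + 1)^{-1/2} \; \leq \; \frac{M_\nu(\delta)}{\lambda^{\frac{1}{2} + \delta}}.$$ -/

import Mathlib

open Real MeasureTheory

/-!
With `E = √(|p|² + M²)`, the multiplier is at most `E (E² + λ)⁻¹ (E + 1)^(-s)`, `s = 1/2`. Split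
`E = E^(1 - 2δ) E^(2δ)`. The weighted AM-GM inequality absorbs `E^(1 - 2δ) λ^(1/2 + δ)` into
`E² + λ`, and `(E + 1)^s` absorbs `E^(2δ)` as soon as `2δ ≤ s`. The resulting constant is `1`,
uniformly in `M`.
-/

lemma rpow_one_sub_two_mul_mul_rpow_le_sq_add {E lam δ : ℝ} (hE : 0 ≤ E) (hlam : 0 ≤ lam)
    (hδ0 : 0 ≤ δ) (hδ : δ ≤ 1 / 2) :
    E ^ (1 - 2 * δ) * lam ^ (1 / 2 + δ) ≤ E ^ 2 + lam := by
  calc E ^ (1 - 2 * δ) * lam ^ (1 / 2 + δ)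
      = (E ^ 2) ^ (1 / 2 - δ) * lam ^ (1 / 2 + δ) := by
        rw [← rpow_natCast_mul hE]
        ring_nf
    _ ≤ (1 / 2 - δ) * E ^ 2 + (1 / 2 + δ) * lam :=
        geom_mean_le_arith_mean2_weighted (by linarith) (by linarith) (sq_nonneg E) hlam (by ring)
    _ ≤ 1 * E ^ 2 + 1 * lam := by gcongr <;> linarith
    _ = E ^ 2 + lam := by ring

lemma rpow_le_add_one_rpow {E a s : ℝ} (hE : 0 ≤ E) (ha : 0 ≤ a) (has : a ≤ s) :
    E ^ a ≤ (E + 1) ^ s :=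
  calc E ^ a ≤ (E + 1) ^ a := rpow_le_rpow hE (by linarith) ha
    _ ≤ (E + 1) ^ s := rpow_le_rpow_of_exponent_le (by linarith) has

lemma mul_rpow_le_sq_add_mul_add_one_rpow {E lam δ s : ℝ} (hE : 0 ≤ E) (hlam : 0 ≤ lam)
    (hδ0 : 0 ≤ δ) (hδ : δ ≤ 1 / 2) (hs : 2 * δ ≤ s) :
    E * lam ^ (1 / 2 + δ) ≤ (E ^ 2 + lam) * (E + 1) ^ s := by
  have hsplit : E = E ^ (1 - 2 * δ) * E ^ (2 * δ) := by
    rw [← rpow_add_of_nonneg hE (by linarith) (by linarith), sub_add_cancel, rpow_one]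
  calc E * lam ^ (1 / 2 + δ)
      = E ^ (1 - 2 * δ) * lam ^ (1 / 2 + δ) * E ^ (2 * δ) := by
        rw [mul_right_comm, ← hsplit]
    _ ≤ (E ^ 2 + lam) * (E + 1) ^ s := by
        gcongr
        · exact rpow_one_sub_two_mul_mul_rpow_le_sq_add hE hlam hδ0 hδ
        · exact rpow_le_add_one_rpow hE (by linarith) hs

lemma mul_inv_mul_rpow_neg_le_one_div_rpow {E lam δ s : ℝ} (hE : 0 ≤ E) (hlam : 0 < lam)
    (hδ0 : 0 ≤ δ) (hδ : δ ≤ 1 / 2) (hs : 2 * δ ≤ s) :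
    E * (E ^ 2 + lam)⁻¹ * (E + 1) ^ (-s) ≤ 1 / lam ^ (1 / 2 + δ) := by
  rw [rpow_neg (by positivity), mul_assoc, ← mul_inv, ← div_eq_mul_inv,
    div_le_div_iff₀ (by positivity) (by positivity), one_mul]
  exact mul_rpow_le_sq_add_mul_add_one_rpow hE hlam.le hδ0 hδ hs

theorem stmt_0_general {ι : Type*} [Fintype ι] (M : ℝ) {δ s lam : ℝ} (hδ0 : 0 ≤ δ)
    (hδ : δ ≤ 1 / 2) (hs : 2 * δ ≤ s) (hlam : 0 < lam) (p : EuclideanSpace ℝ ι) (ν : ι) :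
    |p ν| * (‖p‖ ^ 2 + M ^ 2 + lam)⁻¹ * (√(‖p‖ ^ 2 + M ^ 2) + 1) ^ (-s)
      ≤ 1 / lam ^ (1 / 2 + δ) := by
  have hcoord : |p ν| ≤ √(‖p‖ ^ 2 + M ^ 2) :=
    (PiLp.norm_apply_le p ν).trans (le_sqrt_of_sq_le (by linarith [sq_nonneg M]))
  have hsq : √(‖p‖ ^ 2 + M ^ 2) ^ 2 = ‖p‖ ^ 2 + M ^ 2 := sq_sqrt (by positivity)
  calc |p ν| * (‖p‖ ^ 2 + M ^ 2 + lam)⁻¹ * (√(‖p‖ ^ 2 + M ^ 2) + 1) ^ (-s)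
      ≤ √(‖p‖ ^ 2 + M ^ 2) * (√(‖p‖ ^ 2 + M ^ 2) ^ 2 + lam)⁻¹ *
          (√(‖p‖ ^ 2 + M ^ 2) + 1) ^ (-s) := by
        rw [hsq]
        gcongr
    _ ≤ 1 / lam ^ (1 / 2 + δ) :=
        mul_inv_mul_rpow_neg_le_one_div_rpow (sqrt_nonneg _) hlam hδ0 hδ hs

/-- Lemma 3.2 of the paper (Fourier-multiplier form): for `δ ∈ (0, 1/10)` there is a
constant `C = M_ν(δ) ≥ 0` such that for all `λ > 0` and `p ∈ ℝᵈ`,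
`|pᵛ| (|p|² + M² + λ)⁻¹ (√(|p|² + M²) + 1)^(-1/2) ≤ C / λ^(1/2 + δ)`. -/
theorem stmt_0 (d : ℕ) (hd : 1 ≤ d) (M δ : ℝ) (hM : 0 < M)
    (hδ : δ ∈ Set.Ioo (0 : ℝ) (1 / 10)) (ν : Fin d) :
    ∃ C : ℝ, 0 ≤ C ∧ ∀ lam : ℝ, 0 < lam → ∀ p : EuclideanSpace ℝ (Fin d),
      |p ν| * (‖p‖ ^ 2 + M ^ 2 + lam)⁻¹ *
          (Real.sqrt (‖p‖ ^ 2 + M ^ 2) + 1) ^ (-(1 / 2 : ℝ))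
        ≤ C / lam ^ ((1 / 2 : ℝ) + δ) :=
  ⟨1, zero_le_one, fun _ hlam p =>
    stmt_0_general M hδ.1.le (by linarith [hδ.2]) (by linarith [hδ.2]) hlam p ν⟩
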